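/- Let m₁, m₂ ≥ 1 be integers and let 0 < θ₀ < π/2 be fixed. Then for every λ ∈ ℝ and t > 0 with |λ| t ≤ θ₀ one has cos(θ₀) · Φ(0, t) ≤ Φ(λ, t) ≤ Φ(0, t); in particular Φ(λ, t) ≍ Φ(0, t) with constants depending only on θ₀, m₁, m₂ whenever |λ t| ≤ θ₀. -/

import Mathlib

open Set intervalIntegral

/-- The density `Δ(t) = (2 sinh t)^{m₁+m₂} (2 cosh t)^{m₂}`. -/
noncomputable def Δ (m₁ m₂ : ℕ) (t : ℝ) : ℝ :=
  (2 * Real.sinh t) ^ (m₁ + m₂) * (2 * Real.cosh t) ^ m₂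

/-- The constant `c₀ = √π 2^{m₂/2-2} Γ((n-1)/2)/Γ(n/2)`, `n = m₁+m₂+1`. -/
noncomputable def c₀ (m₁ m₂ : ℕ) : ℝ :=
  Real.sqrt Real.pi * 2 ^ ((m₂ : ℝ)/2 - 2) *
    Real.Gamma (((m₁ : ℝ) + m₂ + 1 - 1)/2) / Real.Gamma (((m₁ : ℝ) + m₂ + 1)/2)

/-- The Koornwinder integral representation of the elementary spherical function
`φ_λ(a_t)`, for real `λ` (where it is real-valued). -/
noncomputable def PhiR (m₁ m₂ : ℕ) (lam t : ℝ) : ℝ :=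
  (c₀ m₁ m₂ * Real.sinh (2*t) / Δ m₁ m₂ t) *
    ∫ s in (0:ℝ)..t, (Real.cosh (2*t) - Real.cosh (2*s)) ^ ((m₂ : ℝ)/2 - 1) *
      (∫ r in (0:ℝ)..s, (Real.cosh s - Real.cosh r) ^ ((m₁ : ℝ)/2 - 1) * Real.cos (lam * r)) *
      Real.sinh s

/-!
`PhiR m₁ m₂ lam t` is a nonnegative multiple of a positive linear functional of
`r ↦ cos (lam * r)` on `[0, t]`, and `cos θ₀ ≤ cos (lam * r) ≤ 1` there. The analytic content is
that the iterated integral converges for all exponents above `-1`: `cosh s - cosh r` is comparable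
to `s * (s - r)`, so the inner integral with exponent `a` is `O(s ^ (2 * a + 1))`, and the factor
`sinh s` absorbs the blow-up of this bound at `s = 0` when `a < -1 / 2`.
-/

section

open Real MeasureTheory

lemma sinh_le_self_mul_cosh {x : ℝ} (hx : 0 ≤ x) : sinh x ≤ x * cosh x := by
  have h_deriv : ∀ y ∈ interior (Icc 0 x), deriv sinh y ≤ cosh x := by
    intro y hy
    rw [interior_Icc] at hy
    rw [Real.deriv_sinh]
    exact cosh_strictMonoOn.monotoneOn hy.1.le hx hy.2.le
  have h := (convex_Icc 0 x).image_sub_le_mul_sub_of_deriv_le continuous_sinh.continuousOn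
    differentiable_sinh.differentiableOn h_deriv 0 (left_mem_Icc.2 hx) x (right_mem_Icc.2 hx) hx
  simpa only [sinh_zero, sub_zero, mul_comm x] using h

lemma cosh_sub_cosh_le_cosh_mul {r s : ℝ} (hr : 0 ≤ r) (hrs : r ≤ s) :
    cosh s - cosh r ≤ cosh s * (s * (s - r)) := by
  have h_mvt : cosh s - cosh r ≤ sinh s * (s - r) := by
    refine (convex_Icc r s).image_sub_le_mul_sub_of_deriv_le continuous_cosh.continuousOn
      differentiable_cosh.differentiableOn (fun y hy ↦ ?_)
      r (left_mem_Icc.2 hrs) s (right_mem_Icc.2 hrs) hrs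
    rw [interior_Icc] at hy
    rw [Real.deriv_cosh]
    exact sinh_le_sinh.2 hy.2.le
  calc cosh s - cosh r ≤ sinh s * (s - r) := h_mvt
    _ ≤ s * cosh s * (s - r) :=
      mul_le_mul_of_nonneg_right (sinh_le_self_mul_cosh (hr.trans hrs)) (sub_nonneg.2 hrs)
    _ = cosh s * (s * (s - r)) := by ring

lemma half_mul_le_cosh_sub_cosh {r s : ℝ} (hr : 0 ≤ r) (hrs : r ≤ s) :
    1 / 2 * (s * (s - r)) ≤ cosh s - cosh r := by
  have hp : 0 ≤ (s + r) / 2 := by linarith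
  have hq : 0 ≤ (s - r) / 2 := by linarith
  have h_prod : cosh s - cosh r = 2 * (sinh ((s + r) / 2) * sinh ((s - r) / 2)) := by
    have h_add := cosh_add ((s + r) / 2) ((s - r) / 2)
    have h_sub := cosh_sub ((s + r) / 2) ((s - r) / 2)
    ring_nf at h_add h_sub ⊢
    linarith
  calc 1 / 2 * (s * (s - r)) ≤ 2 * ((s + r) / 2 * ((s - r) / 2)) := by
        nlinarith [mul_nonneg hr hq]
    _ ≤ 2 * (sinh ((s + r) / 2) * sinh ((s - r) / 2)) :=
        mul_le_mul_of_nonneg_left (mul_le_mul (self_le_sinh_iff.2 hp) (self_le_sinh_iff.2 hq) hq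
          (sinh_nonneg_iff.2 hp)) zero_le_two
    _ = cosh s - cosh r := h_prod.symm

lemma cosh_sub_cosh_rpow_nonneg (a : ℝ) {r s : ℝ} (hr : 0 ≤ r) (hrs : r ≤ s) :
    0 ≤ (cosh s - cosh r) ^ a :=
  rpow_nonneg (sub_nonneg.2 (cosh_strictMonoOn.monotoneOn hr (hr.trans hrs) hrs)) a

lemma exists_cosh_sub_cosh_rpow_le (a t : ℝ) :
    ∃ C, ∀ s ≤ t, ∀ r ∈ Icc 0 s, (cosh s - cosh r) ^ a ≤ C * (s * (s - r)) ^ a := by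
  rcases le_or_gt 0 a with ha | ha
  · refine ⟨cosh t ^ a, fun s hst r ⟨hr, hrs⟩ ↦ ?_⟩
    have hs : 0 ≤ s := hr.trans hrs
    have h_kernel : 0 ≤ s * (s - r) := mul_nonneg hs (sub_nonneg.2 hrs)
    have h_cosh : cosh s ≤ cosh t := cosh_strictMonoOn.monotoneOn hs (hs.trans hst) hst
    rw [← mul_rpow (cosh_pos t).le h_kernel]
    refine rpow_le_rpow
      (sub_nonneg.2 (cosh_strictMonoOn.monotoneOn hr hs hrs)) ?_ ha
    exact (cosh_sub_cosh_le_cosh_mul hr hrs).trans (mul_le_mul_of_nonneg_right h_cosh h_kernel)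
  · refine ⟨(1 / 2) ^ a, fun s _ r ⟨hr, hrs⟩ ↦ ?_⟩
    rcases hrs.eq_or_lt with rfl | hrs
    · simp [zero_rpow ha.ne]
    have h_kernel : 0 < s * (s - r) := mul_pos (hr.trans_lt hrs) (sub_pos.2 hrs)
    rw [← mul_rpow (by norm_num) h_kernel.le]
    exact rpow_le_rpow_of_nonpos (by positivity) (half_mul_le_cosh_sub_cosh hr hrs.le) ha.le

section AbelKernel

variable {a s : ℝ}

lemma intervalIntegrable_mul_sub_rpow (ha : -1 < a) (hs : 0 ≤ s) :
    IntervalIntegrable (fun r ↦ (s * (s - r)) ^ a) volume 0 s := by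
  have h := ((intervalIntegrable_rpow' (a := 0) (b := s) ha).comp_sub_left s).symm.const_mul (s ^ a)
  simp only [sub_zero, sub_self] at h
  refine h.congr fun r hr ↦ ?_
  rw [uIoc_of_le hs] at hr
  exact (mul_rpow hs (sub_nonneg.2 hr.2)).symm

lemma integral_mul_sub_rpow (ha : -1 < a) (hs : 0 ≤ s) :
    ∫ r in (0 : ℝ)..s, (s * (s - r)) ^ a = s ^ a * (s ^ (a + 1) / (a + 1)) := by
  calc ∫ r in (0 : ℝ)..s, (s * (s - r)) ^ a = ∫ r in (0 : ℝ)..s, s ^ a * (s - r) ^ a := by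
        refine intervalIntegral.integral_congr fun r hr ↦ ?_
        rw [uIcc_of_le hs] at hr
        exact mul_rpow hs (sub_nonneg.2 hr.2)
    _ = s ^ a * ∫ r in (0 : ℝ)..s, r ^ a := by
        rw [intervalIntegral.integral_const_mul,
          intervalIntegral.integral_comp_sub_left (fun r ↦ r ^ a), sub_self, sub_zero]
    _ = s ^ a * (s ^ (a + 1) / (a + 1)) := by
        rw [integral_rpow (.inl ha), zero_rpow (by linarith), sub_zero]

lemma intervalIntegrable_cosh_sub_cosh_rpow (ha : -1 < a) (hs : 0 ≤ s) :
    IntervalIntegrable (fun r ↦ (cosh s - cosh r) ^ a) volume 0 s := by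
  obtain ⟨C, hC⟩ := exists_cosh_sub_cosh_rpow_le a s
  refine ((intervalIntegrable_mul_sub_rpow ha hs).const_mul C).mono_fun'
    (by fun_prop : Measurable _).aestronglyMeasurable ?_
  rw [uIoc_of_le hs]
  filter_upwards [ae_restrict_mem measurableSet_Ioc] with r ⟨hr, hrs⟩
  rw [norm_of_nonneg (cosh_sub_cosh_rpow_nonneg a hr.le hrs)]
  exact hC s le_rfl r ⟨hr.le, hrs⟩

end AbelKernel

/-- The Abel-type transform of `g` with kernel `(cosh s - cosh r) ^ a`, which is the inner integral
of the Koornwinder representation for `a = m₁ / 2 - 1`. -/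
noncomputable def coshAbel (a : ℝ) (g : ℝ → ℝ) (s : ℝ) : ℝ :=
  ∫ r in (0 : ℝ)..s, (cosh s - cosh r) ^ a * g r

/-- The iterated Koornwinder integral with `cos (lam * r)` replaced by an arbitrary function `g`
and the exponents `m₁ / 2 - 1`, `m₂ / 2 - 1` by arbitrary reals `a`, `b`. -/
noncomputable def koornwinderIntegral (a b : ℝ) (g : ℝ → ℝ) (t : ℝ) : ℝ :=
  ∫ s in (0 : ℝ)..t, (cosh (2 * t) - cosh (2 * s)) ^ b * coshAbel a g s * sinh s

lemma coshAbel_const_mul (a c : ℝ) (g : ℝ → ℝ) (s : ℝ) :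
    coshAbel a (fun r ↦ c * g r) s = c * coshAbel a g s := by
  simp only [coshAbel, mul_left_comm _ c, intervalIntegral.integral_const_mul]

lemma koornwinderIntegral_const_mul (a b c : ℝ) (g : ℝ → ℝ) (t : ℝ) :
    koornwinderIntegral a b (fun r ↦ c * g r) t = c * koornwinderIntegral a b g t := by
  simp only [koornwinderIntegral, coshAbel_const_mul, mul_left_comm _ c, mul_assoc c,
    intervalIntegral.integral_const_mul]

section Integrability

variable {a b : ℝ} {g h : ℝ → ℝ} {s t : ℝ}

lemma intervalIntegrable_cosh_sub_cosh_rpow_mul (ha : -1 < a) (hg : Continuous g) (hs : 0 ≤ s) :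
    IntervalIntegrable (fun r ↦ (cosh s - cosh r) ^ a * g r) volume 0 s :=
  (intervalIntegrable_cosh_sub_cosh_rpow ha hs).mul_continuousOn hg.continuousOn

lemma measurable_coshAbel (a : ℝ) (hg : Measurable g) : Measurable (coshAbel a g) := by
  have h_scale : coshAbel a g = fun s ↦
      s * ∫ u in Ioc (0 : ℝ) 1, (cosh s - cosh (s * u)) ^ a * g (s * u) := by
    funext s
    rw [← intervalIntegral.integral_of_le zero_le_one,
      mul_integral_comp_mul_left (f := fun r ↦ (cosh s - cosh r) ^ a * g r), mul_zero, mul_one,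
      coshAbel]
  have h_meas : Measurable fun p : ℝ × ℝ ↦ (cosh p.1 - cosh (p.1 * p.2)) ^ a * g (p.1 * p.2) := by
    fun_prop
  rw [h_scale]
  exact measurable_id.mul h_meas.stronglyMeasurable.integral_prod_right'.measurable

lemma exists_abs_coshAbel_le (ha : -1 < a) (hg : Continuous g) (t : ℝ) :
    ∃ C, ∀ s ∈ Ioc 0 t, |coshAbel a g s| ≤ C * (s ^ a * s ^ (a + 1)) := by
  obtain ⟨C, hC⟩ := exists_cosh_sub_cosh_rpow_le a t
  obtain ⟨M, hM⟩ := isCompact_Icc.exists_bound_of_continuousOn (s := Icc 0 t) hg.continuousOn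
  refine ⟨M * C / (a + 1), fun s ⟨hs, hst⟩ ↦ ?_⟩
  have h_bound : ∀ r ∈ Ioc 0 s,
      ‖(cosh s - cosh r) ^ a * g r‖ ≤ M * C * (s * (s - r)) ^ a := by
    rintro r ⟨hr, hrs⟩
    have h_nonneg := cosh_sub_cosh_rpow_nonneg a hr.le hrs
    have hgM := hM r ⟨hr.le, hrs.trans hst⟩
    rw [norm_mul, norm_of_nonneg h_nonneg, mul_comm, mul_assoc]
    exact mul_le_mul hgM (hC s hst r ⟨hr.le, hrs⟩) h_nonneg ((norm_nonneg _).trans hgM)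
  calc |coshAbel a g s| ≤ ∫ r in (0 : ℝ)..s, M * C * (s * (s - r)) ^ a :=
        intervalIntegral.norm_integral_le_of_norm_le hs.le (.of_forall h_bound)
          ((intervalIntegrable_mul_sub_rpow ha hs.le).const_mul _)
    _ = M * C / (a + 1) * (s ^ a * s ^ (a + 1)) := by
        rw [intervalIntegral.integral_const_mul, integral_mul_sub_rpow ha hs.le]
        ring

lemma exists_abs_coshAbel_mul_sinh_le (ha : -1 < a) (hg : Continuous g) (t : ℝ) :
    ∃ C, ∀ s ∈ Ioc 0 t, |coshAbel a g s * sinh s| ≤ C := by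
  obtain ⟨C, hC⟩ := exists_abs_coshAbel_le ha hg t
  refine ⟨C * (t ^ (a + 1) * t ^ (a + 1)) * cosh t, fun s ⟨hs, hst⟩ ↦ ?_⟩
  have ht : 0 < t := hs.trans_le hst
  have hC₀ : 0 ≤ C :=
    nonneg_of_mul_nonneg_left ((abs_nonneg _).trans (hC s ⟨hs, hst⟩)) (by positivity)
  have h_sinh : 0 ≤ sinh s := sinh_nonneg_iff.2 hs.le
  have h_pow : s ^ (a + 1) ≤ t ^ (a + 1) := rpow_le_rpow hs.le hst (by linarith)
  have h_cosh : cosh s ≤ cosh t := cosh_strictMonoOn.monotoneOn hs.le (hs.le.trans hst) hst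
  calc |coshAbel a g s * sinh s| = |coshAbel a g s| * sinh s := by
        rw [abs_mul, abs_of_nonneg h_sinh]
    _ ≤ C * (s ^ a * s ^ (a + 1)) * (s * cosh s) :=
        mul_le_mul (hC s ⟨hs, hst⟩) (sinh_le_self_mul_cosh hs.le) h_sinh (by positivity)
    _ = C * (s ^ (a + 1) * s ^ (a + 1)) * cosh s := by
        rw [rpow_add_one hs.ne']
        ring
    _ ≤ C * (t ^ (a + 1) * t ^ (a + 1)) * cosh t := by gcongr

lemma intervalIntegrable_koornwinderIntegrand (ha : -1 < a) (hb : -1 < b) (hg : Continuous g)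
    (ht : 0 ≤ t) :
    IntervalIntegrable (fun s ↦ (cosh (2 * t) - cosh (2 * s)) ^ b * coshAbel a g s * sinh s)
      volume 0 t := by
  obtain ⟨C, hC⟩ := exists_abs_coshAbel_mul_sinh_le ha hg t
  have h_weight :
      IntervalIntegrable (fun s ↦ (cosh (2 * t) - cosh (2 * s)) ^ b) volume 0 t := by
    simpa using
      (intervalIntegrable_cosh_sub_cosh_rpow hb (by positivity : 0 ≤ 2 * t)).comp_mul_left (c := 2)
  have h_meas := measurable_coshAbel a hg.measurable
  refine (h_weight.mul_const C).mono_fun' (by fun_prop : Measurable _).aestronglyMeasurable ?_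
  rw [uIoc_of_le ht]
  filter_upwards [ae_restrict_mem measurableSet_Ioc] with s ⟨hs, hst⟩
  have h_nonneg := cosh_sub_cosh_rpow_nonneg b (mul_nonneg zero_le_two hs.le)
    (mul_le_mul_of_nonneg_left hst zero_le_two)
  rw [mul_assoc, norm_mul, norm_of_nonneg h_nonneg]
  exact mul_le_mul_of_nonneg_left (hC s ⟨hs, hst⟩) h_nonneg

lemma coshAbel_mono (ha : -1 < a) (hg : Continuous g) (hh : Continuous h) (hs : 0 ≤ s)
    (hgh : ∀ r ∈ Icc 0 s, g r ≤ h r) : coshAbel a g s ≤ coshAbel a h s :=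
  intervalIntegral.integral_mono_on hs (intervalIntegrable_cosh_sub_cosh_rpow_mul ha hg hs)
    (intervalIntegrable_cosh_sub_cosh_rpow_mul ha hh hs) fun r hr ↦
      mul_le_mul_of_nonneg_left (hgh r hr) (cosh_sub_cosh_rpow_nonneg a hr.1 hr.2)

lemma koornwinderIntegral_mono (ha : -1 < a) (hb : -1 < b) (hg : Continuous g)
    (hh : Continuous h) (ht : 0 ≤ t) (hgh : ∀ r ∈ Icc 0 t, g r ≤ h r) :
    koornwinderIntegral a b g t ≤ koornwinderIntegral a b h t := by
  refine intervalIntegral.integral_mono_on ht (intervalIntegrable_koornwinderIntegrand ha hb hg ht)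
    (intervalIntegrable_koornwinderIntegrand ha hb hh ht) fun s ⟨hs, hst⟩ ↦ ?_
  have h_inner : coshAbel a g s ≤ coshAbel a h s :=
    coshAbel_mono ha hg hh hs fun r hr ↦ hgh r ⟨hr.1, hr.2.trans hst⟩
  have h_weight := cosh_sub_cosh_rpow_nonneg b (mul_nonneg zero_le_two hs)
    (mul_le_mul_of_nonneg_left hst zero_le_two)
  have h_sinh : 0 ≤ sinh s := sinh_nonneg_iff.2 hs
  exact mul_le_mul_of_nonneg_right (mul_le_mul_of_nonneg_left h_inner h_weight) h_sinh

end Integrability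

lemma cos_le_cos_mul_of_abs_mul_le {lam t θ r : ℝ} (hθ : θ ≤ π) (hlam : |lam| * t ≤ θ)
    (hr : r ∈ Icc 0 t) : cos θ ≤ cos (lam * r) := by
  rw [← cos_abs (lam * r), abs_mul, abs_of_nonneg hr.1]
  exact cos_le_cos_of_nonneg_of_le_pi (mul_nonneg (abs_nonneg lam) hr.1) hθ
    ((mul_le_mul_of_nonneg_left hr.2 (abs_nonneg lam)).trans hlam)

lemma c₀_nonneg (m₁ m₂ : ℕ) : 0 ≤ c₀ m₁ m₂ := by
  have h_num : 0 ≤ Gamma (((m₁ : ℝ) + m₂ + 1 - 1) / 2) :=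
    Gamma_nonneg_of_nonneg (by rw [add_sub_cancel_right]; positivity)
  unfold c₀
  positivity

lemma Δ_nonneg (m₁ m₂ : ℕ) {t : ℝ} (ht : 0 ≤ t) : 0 ≤ Δ m₁ m₂ t := by
  have h_sinh : 0 ≤ sinh t := sinh_nonneg_iff.2 ht
  exact mul_nonneg (pow_nonneg (mul_nonneg zero_le_two h_sinh) _) (by positivity)

lemma PhiR_eq_mul_koornwinderIntegral (m₁ m₂ : ℕ) (lam t : ℝ) :
    PhiR m₁ m₂ lam t = c₀ m₁ m₂ * sinh (2 * t) / Δ m₁ m₂ t *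
      koornwinderIntegral (m₁ / 2 - 1) (m₂ / 2 - 1) (fun r ↦ cos (lam * r)) t :=
  rfl

lemma PhiR_prefactor_nonneg (m₁ m₂ : ℕ) {t : ℝ} (ht : 0 ≤ t) :
    0 ≤ c₀ m₁ m₂ * sinh (2 * t) / Δ m₁ m₂ t :=
  div_nonneg (mul_nonneg (c₀_nonneg m₁ m₂) (sinh_nonneg_iff.2 (by positivity))) (Δ_nonneg m₁ m₂ ht)

section SphericalFunction

variable {m₁ m₂ : ℕ} {t : ℝ}

lemma neg_one_lt_half_sub_one {m : ℕ} (hm : 1 ≤ m) : -1 < (m : ℝ) / 2 - 1 := by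
  have : (0 : ℝ) < m := by exact_mod_cast hm
  linarith

lemma PhiR_le_PhiR_zero (hm₁ : 1 ≤ m₁) (hm₂ : 1 ≤ m₂) (ht : 0 ≤ t) (lam : ℝ) :
    PhiR m₁ m₂ lam t ≤ PhiR m₁ m₂ 0 t := by
  simp only [PhiR_eq_mul_koornwinderIntegral]
  refine mul_le_mul_of_nonneg_left ?_ (PhiR_prefactor_nonneg m₁ m₂ ht)
  refine koornwinderIntegral_mono (neg_one_lt_half_sub_one hm₁) (neg_one_lt_half_sub_one hm₂)
    (by fun_prop) (by fun_prop) ht fun r _ ↦ ?_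
  rw [zero_mul, cos_zero]
  exact cos_le_one _

lemma cos_mul_PhiR_zero_le_PhiR (hm₁ : 1 ≤ m₁) (hm₂ : 1 ≤ m₂) (ht : 0 ≤ t) {θ lam : ℝ}
    (hθ : θ ≤ π) (hlam : |lam| * t ≤ θ) :
    cos θ * PhiR m₁ m₂ 0 t ≤ PhiR m₁ m₂ lam t := by
  simp only [PhiR_eq_mul_koornwinderIntegral]
  rw [mul_left_comm, ← koornwinderIntegral_const_mul]
  refine mul_le_mul_of_nonneg_left ?_ (PhiR_prefactor_nonneg m₁ m₂ ht)
  refine koornwinderIntegral_mono (neg_one_lt_half_sub_one hm₁) (neg_one_lt_half_sub_one hm₂)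
    (by fun_prop) (by fun_prop) ht fun r hr ↦ ?_
  rw [zero_mul, cos_zero, mul_one]
  exact cos_le_cos_mul_of_abs_mul_le hθ hlam hr

end SphericalFunction

end

theorem stmt5_general (m₁ m₂ : ℕ) (hm₁ : 1 ≤ m₁) (hm₂ : 1 ≤ m₂) (θ₀ : ℝ) (hθ₀ : θ₀ ≤ Real.pi)
    (lam t : ℝ) (ht : 0 < t) :
    (|lam| * t ≤ θ₀ → Real.cos θ₀ * PhiR m₁ m₂ 0 t ≤ PhiR m₁ m₂ lam t) ∧
      PhiR m₁ m₂ lam t ≤ PhiR m₁ m₂ 0 t :=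
  ⟨cos_mul_PhiR_zero_le_PhiR hm₁ hm₂ ht.le hθ₀, PhiR_le_PhiR_zero hm₁ hm₂ ht.le lam⟩

/-- For `|λ| t ≤ θ₀ < π/2` one has
`cos θ₀ · φ₀(a_t) ≤ φ_λ(a_t) ≤ φ₀(a_t)`; in particular `φ_λ(a_t) ≍ φ₀(a_t)`. -/
theorem stmt5 (m₁ m₂ : ℕ) (hm₁ : 1 ≤ m₁) (hm₂ : 1 ≤ m₂)
    (θ₀ : ℝ) (hθ₀ : 0 < θ₀) (hθ₀' : θ₀ < Real.pi / 2) :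
    ∀ lam t : ℝ, 0 < t → |lam| * t ≤ θ₀ →
      Real.cos θ₀ * PhiR m₁ m₂ 0 t ≤ PhiR m₁ m₂ lam t ∧
      PhiR m₁ m₂ lam t ≤ PhiR m₁ m₂ 0 t :=
  fun lam t ht hlam ↦
    (stmt5_general m₁ m₂ hm₁ hm₂ θ₀ (by linarith [Real.pi_pos]) lam t ht).imp_left (· hlam)
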